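/- arXiv:1504.04875 — 2 statements merged into one kernel-verified Lean document; each statement's English description precedes it below -/
import Mathlib

section
/- Let R be a locally stable commutative ring. Then R is an elementary divisor ring if and only if R is a Bézout ring. -/
open Matrix

/-- A commutative ring `T` has stable range 1: whenever `cT + dT = T`,
there exists `y` with `c + d*y` a unit. -/
def StableRange1 (T : Type) [CommRing T] : Prop :=
  ∀ c d : T, IsCoprime c d → ∃ y : T, IsUnit (c + d * y)

/-- The multiplicative set `S_a = { b | aR + bR = R }`. -/
def Sa (R : Type) [CommRing R] (a : R) : Submonoid R where
  carrier := {x | IsCoprime a x}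
  one_mem' := isCoprime_one_right
  mul_mem' := fun hb hc => IsCoprime.mul_right hb hc

/-- `R` is locally stable: whenever `aR + bR = R` there is `y` such that
`R/(a+by)R` has stable range 1. -/
def LocallyStable (R : Type) [CommRing R] : Prop :=
  ∀ a b : R, IsCoprime a b → ∃ y : R,
    StableRange1 (R ⧸ Ideal.span ({a + b * y} : Set R))

/-- `c` is an adequate element. -/
def Adequate {R : Type} [CommRing R] (c : R) : Prop :=
  ∀ a : R, ∃ r s : R, c = r * s ∧ IsCoprime r a ∧
    ∀ s' : R, s' ∣ s → ¬ IsUnit s' → ¬ IsCoprime s' a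

/-- A ring is clean if every element is the sum of an idempotent and a unit. -/
def IsCleanRing (T : Type) [CommRing T] : Prop :=
  ∀ x : T, ∃ e u : T, IsIdempotentElem e ∧ IsUnit u ∧ x = e + u

/-- A ring is VNL if for every `x`, `x` or `1 - x` is von Neumann regular. -/
def IsVNLRing (T : Type) [CommRing T] : Prop :=
  ∀ x : T, (∃ y : T, x = x * y * x) ∨ (∃ y : T, (1 - x) = (1 - x) * y * (1 - x))

/-- `R` has almost stable range 1: every proper homomorphic image has stable range 1. -/
def AlmostStableRange1 (R : Type) [CommRing R] : Prop :=
  ∀ I : Ideal R, I ≠ ⊥ → StableRange1 (R ⧸ I)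

/-- `R` has adequate range 1. -/
def AdequateRange1 (R : Type) [CommRing R] : Prop :=
  ∀ a b : R, IsCoprime a b → ∃ y : R, Adequate (a + b * y)

/-- A (rectangular) matrix admits diagonal reduction. -/
def DiagonalReduction {R : Type} [CommRing R] {m n : ℕ}
    (A : Matrix (Fin m) (Fin n) R) : Prop :=
  ∃ (P : Matrix (Fin m) (Fin m) R) (Q : Matrix (Fin n) (Fin n) R),
    IsUnit P ∧ IsUnit Q ∧
    (∀ (i : Fin m) (j : Fin n), (i : ℕ) ≠ (j : ℕ) → (P * A * Q) i j = 0) ∧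
    (∀ (i i' : Fin m) (j j' : Fin n), (i : ℕ) = (j : ℕ) → (i' : ℕ) = (j' : ℕ) →
      (i : ℕ) + 1 = (i' : ℕ) → (P * A * Q) i j ∣ (P * A * Q) i' j')

/-- `R` is an elementary divisor ring. -/
def ElementaryDivisorRing (R : Type) [CommRing R] : Prop :=
  ∀ (m n : ℕ) (A : Matrix (Fin m) (Fin n) R), DiagonalReduction A

/-- `GE n R` : the subgroup of `GL n R` generated by elementary matrices. -/
def GE (n : ℕ) (R : Type) [CommRing R] : Subgroup (GL (Fin n) R) :=
  Subgroup.closure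
    { M | ∃ t : Matrix.TransvectionStruct (Fin n) R,
        (M : Matrix (Fin n) (Fin n) R) = t.toMatrix }

/-!
Applying local stability to `a R + (b y + c z) R` when `x a + y b + z c = 1` shows that `R` has
stable range at most `2`, so that a Bézout ring `R` is Hermite. Applying it instead to
`b R + (a x + c z) R` gives `w` with `R / w R` of stable range `1`, hence also `R / g R` for
`g = gcd (w, c)`; this leaves enough freedom in the Bézout coefficients of `g` to verify
Kaplansky's condition on triangular `2 × 2` matrices.

Over a Hermite ring satisfying that condition, every matrix `A` has a value `uᵀ A v` dividing all of
its entries. After the content is factored out this value is a unit, so unimodular row and column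
operations split off a diagonal entry `1`, and induction diagonalizes the rest. Conversely,
diagonalizing `[x, y]` exhibits a generator of `(x, y)`.
-/

section StableRange

/-- Stable range at most 2: unimodular triples can be shortened to unimodular pairs. -/
def StableRange2 (R : Type*) [CommRing R] : Prop :=
  ∀ ⦃a b c x y z : R⦄, x * a + y * b + z * c = 1 → ∃ s t : R, IsCoprime (a + c * s) (b + c * t)

/-- Hermite rings in Kaplansky's sense: any two elements have a common divisor with coprime
cofactors. Equivalently every `1 × 2` matrix admits diagonal reduction. -/
def IsHermite (R : Type*) [CommRing R] : Prop :=
  ∀ a b : R, ∃ d a' b' : R, IsCoprime a' b' ∧ a = d * a' ∧ b = d * b'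

/-- Kaplansky's criterion for a Hermite ring to be an elementary divisor ring: for `a, b, c`
generating the unit ideal, some combination of the rows of `!![a, b; 0, c]` is unimodular. -/
def KaplanskyCondition (R : Type*) [CommRing R] : Prop :=
  ∀ ⦃a b c x y z : R⦄, x * a + y * b + z * c = 1 → ∃ p q : R, IsCoprime (p * a) (p * b + q * c)

lemma StableRange1.of_surjective {S T : Type} [CommRing S] [CommRing T] (f : S →+* T)
    (hf : Function.Surjective f) (hS : StableRange1 S) : StableRange1 T := by
  rintro c d ⟨x, y, hxy⟩
  obtain ⟨c, rfl⟩ := hf c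
  obtain ⟨d, rfl⟩ := hf d
  obtain ⟨x, rfl⟩ := hf x
  obtain ⟨y, rfl⟩ := hf y
  obtain ⟨t, ht⟩ := hS c (d * y + (1 - x * c - y * d)) ⟨x, 1, by ring⟩
  refine ⟨f (y * t), ?_⟩
  convert ht.map f using 1
  simp only [map_add, map_sub, map_mul, map_one]
  linear_combination f t * hxy

lemma isCoprime_of_isUnit_quotient_mk {R : Type*} [CommRing R] {g a : R}
    (ha : IsUnit (Ideal.Quotient.mk (Ideal.span {g}) a)) : IsCoprime g a := by
  obtain ⟨b, hb⟩ := ha.exists_left_inv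
  obtain ⟨b, rfl⟩ := Ideal.Quotient.mk_surjective b
  rw [← map_mul, ← map_one (Ideal.Quotient.mk _), Ideal.Quotient.eq,
    Ideal.mem_span_singleton] at hb
  obtain ⟨k, hk⟩ := hb
  exact ⟨-k, b, by linear_combination hk⟩

lemma StableRange1.exists_isCoprime_add_mul {R : Type} [CommRing R] {g w c d x y z : R}
    (hw : StableRange1 (R ⧸ Ideal.span {w})) (hg : g ∣ w) (h : x * c + y * d + z * g = 1) :
    ∃ t, IsCoprime g (c + d * t) := by
  have hquot : StableRange1 (R ⧸ Ideal.span {g}) :=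
    hw.of_surjective (Ideal.Quotient.factor (Ideal.span_singleton_le_span_singleton.2 hg))
      (Ideal.Quotient.factor_surjective _)
  let π := Ideal.Quotient.mk (Ideal.span {g})
  have hπg : π g = 0 := Ideal.Quotient.eq_zero_iff_mem.2 (Ideal.mem_span_singleton_self g)
  obtain ⟨t, ht⟩ := hquot (π c) (π d) ⟨π x, π y, by simpa [hπg] using congrArg π h⟩
  obtain ⟨t, rfl⟩ := Ideal.Quotient.mk_surjective t
  rw [← map_mul, ← map_add] at ht
  exact ⟨t, isCoprime_of_isUnit_quotient_mk ht⟩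

lemma LocallyStable.stableRange2 {R : Type} [CommRing R] (h : LocallyStable R) :
    StableRange2 R := by
  intro a b c x y z hxyz
  obtain ⟨k, hk⟩ := h a (b * y + c * z) ⟨x, 1, by linear_combination hxyz⟩
  set w := a + (b * y + c * z) * k with hw
  obtain ⟨t, ht⟩ := hk.exists_isCoprime_add_mul (c := b) (d := c) (x := y - x * k * y)
    (y := z - x * k * z) (z := x) dvd_rfl (by linear_combination hxyz + x * hw)
  refine ⟨z * k - t * y * k, t, ?_⟩
  have hsub : a + c * (z * k - t * y * k) = w + (b + c * t) * -(y * k) := by rw [hw]; ring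
  rw [hsub]
  exact ht.add_mul_left_left _

lemma StableRange2.isHermite {R : Type*} [CommRing R] [IsBezout R] (h : StableRange2 R) :
    IsHermite R := by
  intro a b
  obtain ⟨x, y, hxy⟩ := IsBezout.gcd_eq_sum a b
  obtain ⟨a', ha⟩ := IsBezout.gcd_dvd_left a b
  obtain ⟨b', hb⟩ := IsBezout.gcd_dvd_right a b
  set d := IsBezout.gcd a b
  -- The defect `1 - x a' - y b'` is annihilated by `d`, so it may be added to the cofactors.
  have hann : d * (1 - x * a' - y * b') = 0 := by linear_combination -hxy + x * ha + y * hb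
  obtain ⟨s, t, hst⟩ := h (show x * a' + y * b' + 1 * (1 - x * a' - y * b') = 1 by ring)
  exact ⟨d, _, _, hst, by linear_combination ha - s * hann, by linear_combination hb - t * hann⟩

lemma LocallyStable.kaplanskyCondition {R : Type} [CommRing R] (h : LocallyStable R)
    (hR : IsHermite R) : KaplanskyCondition R := by
  intro a b c x y z hxyz
  obtain ⟨k, hk⟩ := h b (a * x + c * z) ⟨y, 1, by linear_combination hxyz⟩
  set w := b + (a * x + c * z) * k with hw
  obtain ⟨g, w', c', ⟨r, s, hrs⟩, hw', hc'⟩ := hR w c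
  -- Every `(r + c' t, s - w' t)` combines `w` and `c` to `g`; choose `t` making `r + c' t` prime
  -- to `g`.
  obtain ⟨t, ht⟩ := hk.exists_isCoprime_add_mul (c := r) (d := c') (x := w') (y := s) (z := 0)
    ⟨w', hw'⟩ (by linear_combination hrs)
  set p := r + c' * t with hp
  have hga : IsCoprime g a := ⟨w' * y + c' * (z - z * k * y), x - x * k * y, by
    linear_combination hxyz + y * hw - y * hw' - (z - z * k * y) * hc'⟩
  have hcomb : p * b + (s - w' * t + p * z * k) * c = g + p * a * -(x * k) := by
    linear_combination p * hw' - p * hw + (s - w' * t) * hc' + g * hrs + g * w' * hp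
  refine ⟨p, s - w' * t + p * z * k, ?_⟩
  rw [hcomb]
  exact (ht.mul_right hga).symm.add_mul_left_right _

end StableRange

section Content

variable {R : Type*} [CommRing R] {m n : Type*} [Fintype m] [Fintype n]

/-- Some value `uᵀ A v` of the bilinear form of `A` divides all entries of `A`, so that the ideal
generated by the entries is generated by this value. -/
def RepresentsContent (A : Matrix m n R) : Prop :=
  ∃ (u : m → R) (v : n → R), ∀ i j, u ⬝ᵥ A *ᵥ v ∣ A i j

lemma dvd_mul_mul_apply {l o : Type*} {A : Matrix m n R} {d : R} (hd : ∀ i j, d ∣ A i j)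
    (P : Matrix l m R) (Q : Matrix n o R) (i : l) (j : o) : d ∣ (P * A * Q) i j := by
  simp only [mul_apply]
  exact Finset.dvd_sum fun j' _ =>
    (Finset.dvd_sum fun i' _ => (hd i' j').mul_left _).mul_right _

lemma RepresentsContent.of_mul_mul [DecidableEq m] [DecidableEq n] {A : Matrix m n R}
    (P : GL m R) (Q : GL n R) (h : RepresentsContent (P.val * A * Q.val)) :
    RepresentsContent A := by
  obtain ⟨u, v, huv⟩ := h
  refine ⟨u ᵥ* P.val, Q.val *ᵥ v, fun i j => ?_⟩
  have hval : (u ᵥ* P.val) ⬝ᵥ A *ᵥ (Q.val *ᵥ v) = u ⬝ᵥ (P.val * A * Q.val) *ᵥ v := by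
    simp only [dotProduct_mulVec, vecMul_vecMul, mulVec_mulVec, Matrix.mul_assoc]
  have hA : P⁻¹.val * (P.val * A * Q.val) * Q⁻¹.val = A := by
    simp only [Matrix.mul_assoc, Units.mul_inv, Matrix.mul_one]
    rw [← Matrix.mul_assoc, Units.inv_mul, Matrix.one_mul]
  rw [hval, ← congrFun₂ hA i j]
  exact dvd_mul_mul_apply huv _ _ i j

end Content

section Hermite

variable {R : Type*} [CommRing R] {ι : Type*} [Fintype ι] [DecidableEq ι]

lemma extend_comp_self {α β γ : Type*} {e : α → β} (he : e.Injective) (f : β → γ) :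
    Function.extend e (f ∘ e) f = f := by
  ext b
  by_cases hb : ∃ a, e a = b
  · obtain ⟨a, rfl⟩ := hb
    exact he.extend_apply _ _ a
  · exact Function.extend_apply' _ _ b hb

lemma extend_extend {α β γ : Type*} {e : α → β} (he : e.Injective) (g g' : α → γ) (f : β → γ) :
    Function.extend e g (Function.extend e g' f) = Function.extend e g f := by
  ext b
  by_cases hb : ∃ a, e a = b
  · obtain ⟨a, rfl⟩ := hb
    rw [he.extend_apply, he.extend_apply]
  · simp only [Function.extend_apply' _ _ b hb]

/-- The endomorphism acting as `M` on the coordinates in the range of `e` and as the identity on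
the others. -/
noncomputable def extendEnd {κ : Type*} [Fintype κ] [DecidableEq κ] (e : κ ↪ ι) :
    Matrix κ κ R →* Module.End R (ι → R) where
  toFun M :=
    { toFun f := Function.extend e (M *ᵥ (f ∘ e)) f
      map_add' f g := by rw [Pi.add_comp, mulVec_add, Function.extend_add]
      map_smul' r f := by rw [Pi.smul_comp, mulVec_smul, Function.extend_smul, RingHom.id_apply] }
  map_one' := LinearMap.ext fun f => by
    change Function.extend e (1 *ᵥ (f ∘ e)) f = f
    rw [one_mulVec, extend_comp_self e.injective]
  map_mul' M N := LinearMap.ext fun f => by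
    change Function.extend e ((M * N) *ᵥ (f ∘ e)) f =
      Function.extend e (M *ᵥ (Function.extend e (N *ᵥ (f ∘ e)) f ∘ e))
        (Function.extend e (N *ᵥ (f ∘ e)) f)
    rw [Function.extend_comp e.injective, mulVec_mulVec, extend_extend e.injective]

/-- The matrix of `extendEnd e M`; being multiplicative in `M`, it is invertible when `M` is. -/
noncomputable def extendMatrix {κ : Type*} [Fintype κ] [DecidableEq κ] (e : κ ↪ ι) :
    Matrix κ κ R →* Matrix ι ι R :=
  (LinearMap.toMatrixAlgEquiv' : Module.End R (ι → R) ≃ₐ[R] _).toMonoidHom.comp (extendEnd e)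

lemma extendMatrix_mulVec {κ : Type*} [Fintype κ] [DecidableEq κ] (e : κ ↪ ι)
    (M : Matrix κ κ R) (f : ι → R) :
    extendMatrix e M *ᵥ f = Function.extend e (M *ᵥ (f ∘ e)) f :=
  LinearMap.toMatrix'_mulVec (extendEnd e M) f

lemma IsHermite.exists_mulVec_pair (hR : IsHermite R) (a b : R) :
    ∃ (P : GL (Fin 2) R) (d : R), P.val *ᵥ ![a, b] = ![d, 0] := by
  obtain ⟨d, a', b', ⟨x, y, hxy⟩, rfl, rfl⟩ := hR a b
  let P : SpecialLinearGroup (Fin 2) R :=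
    ⟨!![x, y; -b', a'], by rw [det_fin_two_of]; linear_combination hxy⟩
  refine ⟨P, d, ?_⟩
  change !![x, y; -b', a'] *ᵥ ![d * a', d * b'] = ![d, 0]
  refine funext (Fin.forall_fin_two.2 ⟨?_, ?_⟩) <;> rw [mulVec, vec2_dotProduct]
  · change x * (d * a') + y * (d * b') = d
    linear_combination d * hxy
  · change -b' * (d * a') + a' * (d * b') = 0
    ring

lemma IsHermite.exists_mulVec_eq_zero (hR : IsHermite R) (w : ι → R) {i : ι} (s : Finset ι)
    (hi : i ∉ s) : ∃ P : GL ι R, ∀ j ∈ s, (P.val *ᵥ w) j = 0 := by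
  induction s using Finset.induction_on with
  | empty => exact ⟨1, by simp⟩
  | insert k s hk ih =>
    obtain ⟨hik, his⟩ := not_or.1 (Finset.mem_insert.not.1 hi)
    obtain ⟨P, hP⟩ := ih his
    let e : Fin 2 ↪ ι := ⟨![i, k], by
      rw [← List.nodup_ofFn]
      simp [hik]⟩
    obtain ⟨M, d, hM⟩ := hR.exists_mulVec_pair ((P.val *ᵥ w) i) ((P.val *ᵥ w) k)
    refine ⟨Units.map (extendMatrix e) M * P, fun j hj => ?_⟩
    have hext : (Units.map (extendMatrix e) M * P).val *ᵥ w =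
        Function.extend e ![d, 0] (P.val *ᵥ w) := by
      rw [Units.val_mul, ← mulVec_mulVec, Units.coe_map]
      change extendMatrix e M.val *ᵥ _ = _
      rw [extendMatrix_mulVec, ← hM]
      congr 2
      ext l
      fin_cases l <;> rfl
    rw [hext]
    by_cases hjk : j = k
    · subst hjk
      exact e.injective.extend_apply ![d, 0] _ 1
    · rw [Function.extend_apply']
      · exact hP j ((Finset.mem_insert.1 hj).resolve_left hjk)
      · rintro ⟨l, rfl⟩
        fin_cases l
        · exact hi hj
        · exact hjk rfl

theorem IsHermite.exists_mulVec_eq_single (hR : IsHermite R) (w : ι → R) (i : ι) :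
    ∃ (P : GL ι R) (d : R), P.val *ᵥ w = Pi.single i d := by
  obtain ⟨P, hP⟩ := hR.exists_mulVec_eq_zero w (Finset.univ.erase i) (Finset.notMem_erase i _)
  refine ⟨P, (P.val *ᵥ w) i, funext fun j => ?_⟩
  obtain rfl | hj := eq_or_ne j i
  · rw [Pi.single_eq_same]
  · rw [Pi.single_eq_of_ne hj, hP j (by simp [hj])]

lemma IsHermite.exists_mulVec_eq_single_one (hR : IsHermite R) {u w : ι → R} (huw : u ⬝ᵥ w = 1)
    (i : ι) : ∃ P : GL ι R, P.val *ᵥ w = Pi.single i 1 := by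
  obtain ⟨P, d, hP⟩ := hR.exists_mulVec_eq_single w i
  have hw : w = P⁻¹.val *ᵥ Pi.single i d := by rw [← hP, mulVec_mulVec, P.inv_mul, one_mulVec]
  have hd : IsUnit d := by
    rw [hw, dotProduct_mulVec, dotProduct_single] at huw
    exact .of_mul_eq_one_right _ huw
  obtain ⟨d, rfl⟩ := hd
  refine ⟨d⁻¹ • P, ?_⟩
  rw [Units.val_smul, Units.smul_def, smul_mulVec, hP, ← Pi.single_smul, smul_eq_mul, Units.inv_mul]

lemma IsHermite.exists_eq_smul (hR : IsHermite R) {ι : Type*} [Fintype ι] [Nonempty ι] (f : ι → R) :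
    ∃ (d : R) (g x : ι → R), f = d • g ∧ x ⬝ᵥ g = 1 := by
  classical
  obtain ⟨i⟩ := ‹Nonempty ι›
  obtain ⟨P, d, hP⟩ := hR.exists_mulVec_eq_single f i
  refine ⟨d, P⁻¹.val *ᵥ Pi.single i 1, P.val.row i, ?_, ?_⟩
  · rw [← mulVec_smul, ← Pi.single_smul, smul_eq_mul, mul_one, ← hP, mulVec_mulVec, P.inv_mul,
      one_mulVec]
  · change (P.val *ᵥ (P⁻¹.val *ᵥ Pi.single i 1)) i = 1
    rw [mulVec_mulVec, P.mul_inv, one_mulVec, Pi.single_eq_same]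

end Hermite

section RepresentsContent

variable {R : Type*} [CommRing R]

lemma IsHermite.representsContent_upperTriangular (hR : IsHermite R) (hK : KaplanskyCondition R)
    (a b c : R) : RepresentsContent !![a, b; 0, c] := by
  obtain ⟨d, g, x, hf, hx⟩ := hR.exists_eq_smul ![a, b, c]
  obtain ⟨rfl, rfl, rfl⟩ : a = d * g 0 ∧ b = d * g 1 ∧ c = d * g 2 :=
    ⟨congrFun hf 0, congrFun hf 1, congrFun hf 2⟩
  rw [dotProduct, Fin.sum_univ_three] at hx
  obtain ⟨p, q, r, s, hrs⟩ := hK hx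
  refine ⟨![p, q], ![r, s], fun i j => ?_⟩
  have hval : ![p, q] ⬝ᵥ !![d * g 0, d * g 1; 0, d * g 2] *ᵥ ![r, s] = d := by
    simp only [mulVec, vec2_dotProduct]
    change p * (d * g 0 * r + d * g 1 * s) + q * (0 * r + d * g 2 * s) = d
    linear_combination d * hrs
  rw [hval]
  fin_cases i <;> fin_cases j <;> simp

lemma IsHermite.representsContent_fin_two (hR : IsHermite R) (hK : KaplanskyCondition R)
    (M : Matrix (Fin 2) (Fin 2) R) : RepresentsContent M := by
  obtain ⟨P, d, hP⟩ := hR.exists_mulVec_eq_single (M.col 0) 0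
  refine .of_mul_mul P 1 ?_
  have htri : P.val * M * (1 : GL (Fin 2) R).val =
      !![d, (P.val * M) 0 1; 0, (P.val * M) 1 1] := by
    have hcol (i) : (P.val * M) i 0 = (Pi.single 0 d : Fin 2 → R) i := congrFun hP i
    ext i j
    fin_cases i <;> fin_cases j <;> simp [hcol]
  rw [htri]
  exact hR.representsContent_upperTriangular hK _ _ _

/-- The entries are absorbed one at a time: the value already found and the new entry are diagonal
entries of a `2 × 2` matrix of values of the bilinear form. -/
theorem IsHermite.representsContent (hR : IsHermite R) (hK : KaplanskyCondition R)
    {m n : Type*} [Fintype m] [Fintype n] (A : Matrix m n R) : RepresentsContent A := by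
  classical
  suffices hs : ∀ s : Finset (m × n), ∃ u v, ∀ ij ∈ s, u ⬝ᵥ A *ᵥ v ∣ A ij.1 ij.2 by
    obtain ⟨u, v, huv⟩ := hs Finset.univ
    exact ⟨u, v, fun i j => huv (i, j) (Finset.mem_univ _)⟩
  intro s
  induction s using Finset.induction_on with
  | empty => exact ⟨0, 0, by simp⟩
  | insert k s hk ih =>
    obtain ⟨u, v, huv⟩ := ih
    let U : Matrix (Fin 2) m R := of ![u, Pi.single k.1 1]
    let V : Matrix (Fin 2) n R := of ![v, Pi.single k.2 1]
    obtain ⟨p, q, hpq⟩ := hR.representsContent_fin_two hK (U * A * Vᵀ)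
    have hval : (p ᵥ* U) ⬝ᵥ A *ᵥ (Vᵀ *ᵥ q) = p ⬝ᵥ (U * A * Vᵀ) *ᵥ q := by
      simp only [dotProduct_mulVec, vecMul_vecMul, Matrix.mul_assoc]
    have hold : (U * A * Vᵀ) 0 0 = u ⬝ᵥ A *ᵥ v := by
      rw [dotProduct_mulVec]
      rfl
    have hnew : (U * A * Vᵀ) 1 1 = A k.1 k.2 := by
      calc
        (U * A * Vᵀ) 1 1 = (Pi.single k.1 1 ᵥ* A) ⬝ᵥ Pi.single k.2 1 := rfl
        _ = A k.1 k.2 := by rw [single_one_vecMul, dotProduct_single_one, row_apply]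
    refine ⟨p ᵥ* U, Vᵀ *ᵥ q, fun ij hij => ?_⟩
    rw [hval]
    obtain rfl | hij := Finset.mem_insert.1 hij
    · exact hnew ▸ hpq 1 1
    · exact (hold ▸ hpq 0 0).trans (huv ij hij)

end RepresentsContent

section BorderedMatrix

variable {R : Type*} [CommRing R] {m n k : ℕ}

/-- The block matrix `[1, r; 0, M]`, indexed by `Fin` so as to match `DiagonalReduction`. -/
def bordered (r : Fin n → R) (M : Matrix (Fin m) (Fin n) R) :
    Matrix (Fin (m + 1)) (Fin (n + 1)) R :=
  of (vecCons (vecCons 1 r) fun i => vecCons 0 (M i))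

lemma bordered_mul (r : Fin n → R) (s : Fin k → R) (M : Matrix (Fin m) (Fin n) R)
    (N : Matrix (Fin n) (Fin k) R) :
    bordered r M * bordered s N = bordered (s + r ᵥ* N) (M * N) := by
  ext i j
  cases i using Fin.cases <;> cases j using Fin.cases <;>
    simp [bordered, mul_apply, Fin.sum_univ_succ, vecMul, dotProduct]

lemma bordered_zero_one : bordered 0 (1 : Matrix (Fin n) (Fin n) R) = 1 := by
  ext i j
  cases i using Fin.cases <;> cases j using Fin.cases <;>
    simp [bordered, one_apply, Fin.succ_ne_zero, (Fin.succ_ne_zero _).symm]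

lemma isUnit_bordered (r : Fin n → R) {M : Matrix (Fin n) (Fin n) R} (hM : IsUnit M) :
    IsUnit (bordered r M) := by
  obtain ⟨N, hN⟩ := hM.exists_right_inv
  refine .of_mul_eq_one (bordered (-(r ᵥ* N)) N) ?_
  rw [bordered_mul, hN, neg_add_cancel, bordered_zero_one]

lemma exists_eq_bordered_of_mulVec_single {A : Matrix (Fin (m + 1)) (Fin (n + 1)) R}
    (hA : A *ᵥ Pi.single 0 1 = Pi.single 0 1) :
    ∃ r C, A = bordered r C := by
  refine ⟨fun j => A 0 j.succ, A.submatrix Fin.succ Fin.succ, ?_⟩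
  have hcol (i) : A i 0 = (Pi.single 0 1 : Fin (m + 1) → R) i := by
    rw [← hA, mulVec_single_one, col_apply]
  ext i j
  cases i using Fin.cases <;> cases j using Fin.cases <;> simp [bordered, hcol]

lemma IsHermite.exists_mul_mul_eq_bordered (hR : IsHermite R)
    {A : Matrix (Fin (m + 1)) (Fin (n + 1)) R} {u : Fin (m + 1) → R} {v : Fin (n + 1) → R}
    (huv : u ⬝ᵥ A *ᵥ v = 1) :
    ∃ (P : GL (Fin (m + 1)) R) (Q : GL (Fin (n + 1)) R) (C : Matrix (Fin m) (Fin n) R),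
      P.val * A * Q.val = bordered 0 C := by
  obtain ⟨P, hP⟩ := hR.exists_mulVec_eq_single_one huv 0
  obtain ⟨Q, hQ⟩ := hR.exists_mulVec_eq_single_one (u := u ᵥ* A) (w := v)
    (by rwa [← dotProduct_mulVec]) 0
  have hcol : (P.val * A * Q⁻¹.val) *ᵥ Pi.single 0 1 = Pi.single 0 1 := by
    rw [← hQ, mulVec_mulVec, Matrix.mul_assoc, Q.inv_mul, Matrix.mul_one, ← mulVec_mulVec, hP]
  obtain ⟨r, C, hrC⟩ := exists_eq_bordered_of_mulVec_single hcol
  obtain ⟨T, hT⟩ := isUnit_bordered (-r) isUnit_one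
  refine ⟨P, Q⁻¹ * T, C, ?_⟩
  rw [Units.val_mul, ← Matrix.mul_assoc, hT, hrC, bordered_mul, vecMul_one,
    neg_add_cancel, Matrix.mul_one]

end BorderedMatrix

section DiagonalReduction

variable {R : Type} [CommRing R] {m n : ℕ}

lemma DiagonalReduction.of_mul_mul {A : Matrix (Fin m) (Fin n) R} (P : GL (Fin m) R)
    (Q : GL (Fin n) R) (h : DiagonalReduction (P.val * A * Q.val)) : DiagonalReduction A := by
  obtain ⟨P', Q', hP', hQ', hdiag⟩ := h
  refine ⟨P' * P.val, Q.val * Q', hP'.mul P.isUnit, Q.isUnit.mul hQ', ?_⟩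
  simpa only [Matrix.mul_assoc] using hdiag

lemma DiagonalReduction.smul {A : Matrix (Fin m) (Fin n) R} (h : DiagonalReduction A) (d : R) :
    DiagonalReduction (d • A) := by
  obtain ⟨P, Q, hP, hQ, hdiag, hdvd⟩ := h
  refine ⟨P, Q, hP, hQ, ?_, ?_⟩ <;> rw [Matrix.mul_smul, Matrix.smul_mul]
  · exact fun i j hij => by rw [Matrix.smul_apply, hdiag i j hij, smul_zero]
  · exact fun i i' j j' hij hij' hii' => mul_dvd_mul_left d (hdvd i i' j j' hij hij' hii')

lemma DiagonalReduction.bordered {C : Matrix (Fin m) (Fin n) R} (h : DiagonalReduction C) :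
    DiagonalReduction (bordered 0 C) := by
  obtain ⟨P, Q, hP, hQ, hdiag, hdvd⟩ := h
  refine ⟨_root_.bordered 0 P, _root_.bordered 0 Q, isUnit_bordered 0 hP,
    isUnit_bordered 0 hQ, ?_, ?_⟩ <;>
    simp only [bordered_mul, zero_vecMul, add_zero]
  · intro i j hij
    cases i using Fin.cases <;> cases j using Fin.cases
    · exact absurd rfl hij
    · rfl
    · rfl
    · exact hdiag _ _ (by simpa using hij)
  · intro i i' j j' hij hij' hii'
    cases i' using Fin.cases <;> cases j' using Fin.cases
    · simp at hii'
    · simp at hij'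
    · simp at hij'
    · cases i using Fin.cases <;> cases j using Fin.cases
      · exact one_dvd _
      · simp at hij
      · simp at hij
      · exact hdvd _ _ _ _ (by simpa using hij) (by simpa using hij') (by simpa using hii')

theorem IsHermite.elementaryDivisorRing (hR : IsHermite R) (hK : KaplanskyCondition R) :
    ElementaryDivisorRing R := by
  intro m
  induction m with
  | zero => exact fun n A => ⟨1, 1, isUnit_one, isUnit_one, fun i => i.elim0, fun i => i.elim0⟩
  | succ m ih =>
    intro n A
    cases n with
    | zero => exact ⟨1, 1, isUnit_one, isUnit_one, fun _ j => j.elim0, fun _ _ j => j.elim0⟩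
    | succ n =>
      obtain ⟨d, g, x, hA, hx⟩ := hR.exists_eq_smul (Function.uncurry A)
      let B : Matrix (Fin (m + 1)) (Fin (n + 1)) R := of (Function.curry g)
      obtain rfl : A = d • B := by
        ext i j
        exact congrFun hA (i, j)
      obtain ⟨u, v, huv⟩ := hR.representsContent hK B
      have hunit : u ⬝ᵥ B *ᵥ v ∣ 1 :=
        hx ▸ Finset.dvd_sum fun ij _ => (huv ij.1 ij.2).mul_left (x ij)
      obtain ⟨c, hc⟩ := hunit
      obtain ⟨P, Q, C, hPQ⟩ := hR.exists_mul_mul_eq_bordered (u := u) (v := c • v) (A := B)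
        (by rw [mulVec_smul, dotProduct_smul, smul_eq_mul, mul_comm, ← hc])
      refine (DiagonalReduction.of_mul_mul P Q ?_).smul d
      rw [hPQ]
      exact (ih n C).bordered

lemma DiagonalReduction.representsContent_row {A : Matrix (Fin 1) (Fin (n + 1)) R}
    (h : DiagonalReduction A) : RepresentsContent A := by
  obtain ⟨_, _, ⟨P, rfl⟩, ⟨Q, rfl⟩, hdiag, -⟩ := h
  refine .of_mul_mul P Q ⟨Pi.single 0 1, Pi.single 0 1, fun i j => ?_⟩
  rw [single_one_dotProduct, mulVec_single_one, col_apply, Subsingleton.elim i 0]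
  obtain rfl | hj := eq_or_ne j 0
  · exact dvd_rfl
  · rw [hdiag 0 j fun h => hj (Fin.ext h.symm)]
    exact dvd_zero _

theorem ElementaryDivisorRing.isBezout (h : ElementaryDivisorRing R) : IsBezout R := by
  rw [IsBezout.iff_span_pair_isPrincipal]
  intro x y
  obtain ⟨u, v, huv⟩ := (h 1 2 !![x, y]).representsContent_row
  refine ⟨u ⬝ᵥ !![x, y] *ᵥ v, le_antisymm ?_ ?_⟩
  · rw [Ideal.span_le, Set.insert_subset_iff, Set.singleton_subset_iff]
    exact ⟨Ideal.mem_span_singleton.2 (huv 0 0), Ideal.mem_span_singleton.2 (huv 0 1)⟩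
  · refine (Ideal.span_singleton_le_iff_mem _).2 (Ideal.mem_span_pair.2
      ⟨u 0 * v 0, u 0 * v 1, ?_⟩)
    have hval : u ⬝ᵥ !![x, y] *ᵥ v = u 0 * (x * v 0 + y * v 1) := by
      rw [dotProduct, Fin.sum_univ_one, mulVec, vec2_dotProduct]
      rfl
    linear_combination -hval

end DiagonalReduction

/-- A locally stable commutative ring is an elementary divisor ring iff it is Bézout. -/
theorem stmt_9 (R : Type) [CommRing R] (h : LocallyStable R) :
    ElementaryDivisorRing R ↔ IsBezout R := by
  exact ⟨ElementaryDivisorRing.isBezout, fun _ =>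
    have hR : IsHermite R := h.stableRange2.isHermite
    hR.elementaryDivisorRing (h.kaplanskyCondition hR)⟩
end

section
/- Let R be a Bézout commutative ring such that R/aR is a VNL ring for every a ∉ J(R). Then for any n×n matrix A over R there exist P ∈ GE_n(R) and Q ∈ GL_n(R) such that PAQ = diag(ε_1,...,ε_n) with ε_i dividing ε_{i+1}. -/
open Matrix

/-! The VNL hypothesis, applied modulo `a²b²` with `a` and `b` coprime, makes `a` or `b` von
Neumann regular in `R` itself, and this gives stable range 1; if `a²b²` lies in the Jacobson
radical, `a + b` is already a unit. Over a Bézout ring, stable range 1 says that every vector `v`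
has a combination `s ⬝ v` dividing all its entries with one prescribed coefficient of `s` equal
to 1. For a matrix `A` this yields `s` and `y`, each with leading entry 1, such that `s ⬝ A y`
divides every entry of `A`. Replacing the first row or column of the identity by such an `s` or `y`
gives a product of elementary matrices, so elementary operations move this common divisor into the
corner, where it clears its row and column. -/

section Units

variable {R : Type*} [CommRing R]

theorem isUnit_of_isCoprime_of_mem_jacobson {u j : R} (huj : IsCoprime u j)
    (hj : j ∈ Ideal.jacobson (⊥ : Ideal R)) : IsUnit u := by
  obtain ⟨x, y, hxy⟩ := huj
  have hunit : IsUnit (j * -y + 1) := Ideal.mem_jacobson_bot.mp hj (-y)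
  rw [show j * -y + 1 = x * u by linear_combination -hxy] at hunit
  exact isUnit_of_mul_isUnit_right hunit

theorem exists_isUnit_add_mul_of_sq_dvd_left {a b : R} (hab : IsCoprime a b) (ha : a ^ 2 ∣ a) :
    ∃ y, IsUnit (a + b * y) := by
  obtain ⟨x, y, hxy⟩ := hab
  obtain ⟨z, hz⟩ := ha
  have hcomplement : b * (y * (1 - a * z)) = 1 - a * z := by
    linear_combination (1 - a * z) * hxy - x * hz
  refine ⟨y * (1 - a * z), IsUnit.of_mul_eq_one (a * z * z + (1 - a * z)) ?_⟩
  rw [hcomplement]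
  linear_combination (1 - z) ^ 2 * hz

theorem exists_isUnit_add_mul_of_sq_dvd_right {a b : R} (hab : IsCoprime a b) (hb : b ^ 2 ∣ b) :
    ∃ y, IsUnit (a + b * y) := by
  obtain ⟨x, y, hxy⟩ := hab
  obtain ⟨z, hz⟩ := hb
  have hcomplement : (1 - b * z) * (a * x) = 1 - b * z := by
    linear_combination (1 - b * z) * hxy - y * hz
  have hidem : b * z * (b * z) = b * z := by linear_combination -z * hz
  refine ⟨z * (1 - a), IsUnit.of_mul_eq_one ((1 - b * z) * x + b * z) ?_⟩
  linear_combination hcomplement + (1 - a) * (1 - x) * hidem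

theorem sq_dvd_of_regular_mk {a c x : R} (hac : a ^ 2 ∣ c) (hx : a ^ 2 ∣ x - a)
    (hreg : ∃ y : R ⧸ Ideal.span {c}, (Ideal.Quotient.mk _ x) =
      Ideal.Quotient.mk _ x * y * Ideal.Quotient.mk _ x) : a ^ 2 ∣ a := by
  obtain ⟨y, hy⟩ := hreg
  obtain ⟨y, rfl⟩ := Ideal.Quotient.mk_surjective y
  rw [← map_mul, ← map_mul, Ideal.Quotient.eq, Ideal.mem_span_singleton] at hy
  obtain ⟨u, hu⟩ := hac.trans hy
  obtain ⟨v, hv⟩ := hx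
  exact ⟨u - v + y * (1 + a * v) ^ 2,
    by linear_combination hu + (y * (x + a + a ^ 2 * v) - 1) * hv⟩

end Units

section VNLQuotients

variable {R : Type} [CommRing R]

theorem IsVNLRing.sq_dvd_or_sq_dvd {a b : R} (hab : IsCoprime a b)
    (hvnl : IsVNLRing (R ⧸ Ideal.span {a ^ 2 * b ^ 2})) : a ^ 2 ∣ a ∨ b ^ 2 ∣ b := by
  obtain ⟨p, q, hpq⟩ : IsCoprime (a ^ 2) (b ^ 2) := hab.pow
  obtain ⟨x, hxa, hxb⟩ : ∃ x, a ^ 2 ∣ x - a ∧ b ^ 2 ∣ 1 - x - b :=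
    ⟨a + a ^ 2 * (p * (1 - a - b)), ⟨p * (1 - a - b), by ring⟩,
      ⟨q * (1 - a - b), by linear_combination -(1 - a - b) * hpq⟩⟩
  exact (hvnl (Ideal.Quotient.mk _ x)).imp (sq_dvd_of_regular_mk (dvd_mul_right _ _) hxa)
    fun hreg => sq_dvd_of_regular_mk (dvd_mul_left _ (a ^ 2)) hxb
      (by simpa only [map_sub, map_one] using hreg)

theorem stableRange1_of_isVNLRing_quotient
    (h : ∀ a : R, a ∉ Ideal.jacobson (⊥ : Ideal R) → IsVNLRing (R ⧸ Ideal.span {a})) :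
    StableRange1 R := by
  intro a b hab
  by_cases hJ : a ^ 2 * b ^ 2 ∈ Ideal.jacobson (⊥ : Ideal R)
  · have ha : IsCoprime (a + b) a := by simpa [add_comm] using hab.symm.add_mul_left_left 1
    have hb : IsCoprime (a + b) b := by simpa using hab.add_mul_left_left 1
    have hunit : IsUnit (a + b) :=
      isUnit_of_isCoprime_of_mem_jacobson (ha.pow_right.mul_right hb.pow_right) hJ
    exact ⟨1, by simpa using hunit⟩
  · exact (IsVNLRing.sq_dvd_or_sq_dvd hab (h _ hJ)).elim
      (exists_isUnit_add_mul_of_sq_dvd_left hab) (exists_isUnit_add_mul_of_sq_dvd_right hab)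

end VNLQuotients

namespace StableRange1

variable {R : Type} [CommRing R] [IsBezout R] (hR : StableRange1 R)
include hR

theorem exists_dotProduct_dvd {ι : Type*} [Fintype ι] (v : ι → R) (i : ι) :
    ∃ s : ι → R, s i = 1 ∧ ∀ j, s ⬝ᵥ v ∣ v j := by
  classical
  obtain ⟨d, hd⟩ := IsBezout.isPrincipal_of_FG (Ideal.span (Set.range v))
    (Submodule.fg_span (Set.finite_range v))
  rw [Ideal.submodule_span_eq] at hd
  have hdvd (j : ι) : d ∣ v j := Ideal.mem_span_singleton.mp
    (hd ▸ Ideal.subset_span (Set.mem_range_self j))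
  obtain ⟨w, hw⟩ : ∃ w : ι → R, w ⬝ᵥ v = d := Ideal.mem_span_range_iff_exists_fun.mp
    (hd ▸ Ideal.mem_span_singleton_self d)
  obtain ⟨a, ha⟩ := hdvd i
  -- `d * (1 - a * w i)` is the part of `w ⬝ᵥ v` that avoids the index `i`.
  obtain ⟨z, hz⟩ := hR a (1 - a * w i) ⟨w i, 1, by ring⟩
  refine ⟨Pi.single i 1 + z • (w - Pi.single i (w i)), by simp, fun j => ?_⟩
  have hcomb : (Pi.single i 1 + z • (w - Pi.single i (w i))) ⬝ᵥ v =
      d * (a + (1 - a * w i) * z) := by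
    simp only [add_dotProduct, smul_dotProduct, sub_dotProduct, single_dotProduct, hw, smul_eq_mul]
    linear_combination (1 - z * w i) * ha
  rw [hcomb, hz.mul_right_dvd]
  exact hdvd j

theorem exists_forall_dvd_of_dvd_mulVec {κ : Type*} [Fintype κ] (k : κ) {m : ℕ}
    (A : Matrix (Fin m) κ R) :
    ∃ y : κ → R, y k = 1 ∧ ∀ x, (∀ i, x ∣ (A *ᵥ y) i) → ∀ i j, x ∣ A i j := by
  classical
  induction m with
  | zero => exact ⟨Pi.single k 1, by simp, fun _ _ i => i.elim0⟩
  | succ m ih =>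
    obtain ⟨y, -, hy⟩ := ih (A.submatrix Fin.succ id)
    obtain ⟨s, hs, hsdvd⟩ := hR.exists_dotProduct_dvd (A *ᵥ y) 0
    obtain ⟨y', hy', hdvd⟩ := hR.exists_dotProduct_dvd (s ᵥ* A) k
    set g := y' ⬝ᵥ (s ᵥ* A) with hg
    have hgs : g ∣ s ⬝ᵥ (A *ᵥ y) := by
      rw [dotProduct_mulVec]
      exact Finset.dvd_sum fun j _ => (hdvd j).mul_right _
    have hsucc : ∀ (i : Fin m) j, g ∣ A i.succ j :=
      hy g fun i => hgs.trans (hsdvd i.succ)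
    have hzero (j : κ) : g ∣ A 0 j := by
      have hsum : (s ᵥ* A) j = A 0 j + ∑ i : Fin m, s i.succ * A i.succ j := by
        simp [vecMul, dotProduct, Fin.sum_univ_succ, hs]
      have hrest : g ∣ ∑ i : Fin m, s i.succ * A i.succ j :=
        Finset.dvd_sum fun i _ => (hsucc i j).mul_left _
      exact (dvd_add_left hrest).mp (hsum ▸ hdvd j)
    refine ⟨y', hy', fun x hx i j => ?_⟩
    have hxg : x ∣ g := by
      rw [hg, dotProduct_comm, ← dotProduct_mulVec]
      exact Finset.dvd_sum fun i _ => (hx i).mul_left _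
    exact hxg.trans (Fin.cases (hzero j) (fun i => hsucc i j) i)

theorem exists_dotProduct_mulVec_dvd {κ : Type*} [Fintype κ] {m : ℕ} (i : Fin m) (k : κ)
    (A : Matrix (Fin m) κ R) :
    ∃ (s : Fin m → R) (y : κ → R), s i = 1 ∧ y k = 1 ∧ ∀ i j, s ⬝ᵥ (A *ᵥ y) ∣ A i j := by
  obtain ⟨y, hy, hdvd⟩ := hR.exists_forall_dvd_of_dvd_mulVec k A
  obtain ⟨s, hs, hsdvd⟩ := hR.exists_dotProduct_dvd (A *ᵥ y) i
  exact ⟨s, y, hs, hy, hdvd _ hsdvd⟩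

end StableRange1

section ElementaryMatrices

variable (ι R : Type*) [Fintype ι] [DecidableEq ι] [CommRing R]

/-- The products of elementary matrices, as a submonoid of the square matrices over an arbitrary
finite index type; for `ι = Fin n` these are the matrices underlying `GE n R`. -/
def elementaryMatrices : Submonoid (Matrix ι ι R) :=
  Submonoid.closure (Set.range TransvectionStruct.toMatrix)

namespace elementaryMatrices

variable {ι R}

theorem transvection_mem {i j : ι} (hij : i ≠ j) (c : R) :
    transvection i j c ∈ elementaryMatrices ι R :=
  Submonoid.subset_closure ⟨⟨i, j, hij, c⟩, rfl⟩

theorem transpose_mem {M : Matrix ι ι R} (hM : M ∈ elementaryMatrices ι R) :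
    Mᵀ ∈ elementaryMatrices ι R := by
  induction hM using Submonoid.closure_induction with
  | mem M hM =>
    obtain ⟨⟨i, j, hij, c⟩, rfl⟩ := hM
    simpa [transvection] using transvection_mem hij.symm c
  | one => simp
  | mul M N _ _ ihM ihN => simpa using mul_mem ihN ihM

theorem one_add_vecMulVec_single_mem {i : ι} {v : ι → R} (hv : v i = 0) :
    1 + vecMulVec (Pi.single i 1) v ∈ elementaryMatrices ι R := by
  have hpartial (t : Finset ι) : 1 + vecMulVec (Pi.single i 1) (∑ j ∈ t, Pi.single j (v j)) ∈
      elementaryMatrices ι R := by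
    induction t using Finset.induction_on with
    | empty => simp
    | insert j t hj ih =>
      rw [Finset.sum_insert hj]
      obtain rfl | hji := eq_or_ne j i
      · simpa [hv] using ih
      · have hsingle : single i j (v j) = vecMulVec (Pi.single i 1) (Pi.single j (v j)) := by
          simp [-mul_ite, single, vecMulVec, ite_and, Pi.single_apply, eq_comm]
        convert mul_mem (transvection_mem hji.symm (v j)) ih using 1
        rw [transvection, hsingle, add_mul, mul_add, mul_add, vecMulVec_mul_vecMulVec,
          vecMulVec_add]
        simp [hji, add_comm, add_left_comm]
  simpa [Finset.univ_sum_single] using hpartial Finset.univ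

theorem updateRow_one_mem {i : ι} {s : ι → R} (hs : s i = 1) :
    updateRow 1 i s ∈ elementaryMatrices ι R := by
  convert one_add_vecMulVec_single_mem (v := s - Pi.single i 1) (i := i) (by simp [hs]) using 1
  ext k l
  obtain rfl | hk := eq_or_ne k i
  · simp [vecMulVec_apply, one_apply, Pi.single_apply, eq_comm]
  · simp [vecMulVec_apply, hk]

theorem updateCol_one_mem {i : ι} {s : ι → R} (hs : s i = 1) :
    updateCol 1 i s ∈ elementaryMatrices ι R := by
  simpa [← updateCol_transpose] using transpose_mem (updateRow_one_mem hs)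

theorem exists_mem_GE_coe_eq {R : Type} [CommRing R] {n : ℕ} {M : Matrix (Fin n) (Fin n) R}
    (hM : M ∈ elementaryMatrices (Fin n) R) : ∃ P ∈ GE n R, (P : Matrix (Fin n) (Fin n) R) = M := by
  suffices hle : elementaryMatrices (Fin n) R ≤ (GE n R).toSubmonoid.map (Units.coeHom _) from
    hle hM
  refine Submonoid.closure_le.mpr ?_
  rintro _ ⟨t, rfl⟩
  exact ⟨⟨t.toMatrix, t.inv.toMatrix, t.mul_inv, t.inv_mul⟩, Subgroup.subset_closure ⟨t, rfl⟩, rfl⟩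

end elementaryMatrices

end ElementaryMatrices

section ConsDiagonal

variable {R : Type*} [CommRing R] {l m n : ℕ}

/-- The block-diagonal matrix `diag(g, B)`, by which an `m × n` matrix is embedded into the
`(m + 1) × (n + 1)` matrices. -/
def consDiagonal (g : R) (B : Matrix (Fin m) (Fin n) R) : Matrix (Fin (m + 1)) (Fin (n + 1)) R :=
  of (Fin.cons (Fin.cons g 0) fun i => Fin.cons 0 (B i))

namespace consDiagonal

@[simp]
theorem apply_zero_zero (g : R) (B : Matrix (Fin m) (Fin n) R) : consDiagonal g B 0 0 = g := rfl

@[simp]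
theorem apply_zero_succ (g : R) (B : Matrix (Fin m) (Fin n) R) (j : Fin n) :
    consDiagonal g B 0 j.succ = 0 := rfl

@[simp]
theorem apply_succ_zero (g : R) (B : Matrix (Fin m) (Fin n) R) (i : Fin m) :
    consDiagonal g B i.succ 0 = 0 := rfl

@[simp]
theorem apply_succ_succ (g : R) (B : Matrix (Fin m) (Fin n) R) (i : Fin m) (j : Fin n) :
    consDiagonal g B i.succ j.succ = B i j := rfl

theorem mul (g h : R) (B : Matrix (Fin l) (Fin m) R) (C : Matrix (Fin m) (Fin n) R) :
    consDiagonal g B * consDiagonal h C = consDiagonal (g * h) (B * C) := by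
  ext i j
  cases i using Fin.cases <;> cases j using Fin.cases <;> simp [mul_apply, Fin.sum_univ_succ]

theorem one_transvection (i j : Fin n) (c : R) :
    consDiagonal 1 (transvection i j c) = transvection i.succ j.succ c := by
  ext k l
  cases k using Fin.cases <;> cases l using Fin.cases <;>
    simp [transvection, one_apply, single_apply, Fin.succ_ne_zero, (Fin.succ_ne_zero _).symm]

theorem one_one : consDiagonal 1 (1 : Matrix (Fin n) (Fin n) R) = 1 := by
  ext k l
  cases k using Fin.cases <;> cases l using Fin.cases <;>
    simp [one_apply, (Fin.succ_ne_zero _).symm]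

theorem one_mem_elementaryMatrices {P : Matrix (Fin n) (Fin n) R}
    (hP : P ∈ elementaryMatrices (Fin n) R) :
    consDiagonal 1 P ∈ elementaryMatrices (Fin (n + 1)) R := by
  induction hP using Submonoid.closure_induction with
  | mem P hP =>
    obtain ⟨⟨i, j, hij, c⟩, rfl⟩ := hP
    rw [TransvectionStruct.toMatrix_mk, one_transvection]
    exact elementaryMatrices.transvection_mem (by simpa using hij) c
  | one => simp [one_one]
  | mul P Q _ _ ihP ihQ => simpa [mul] using mul_mem ihP ihQ

end consDiagonal

end ConsDiagonal

section Equivalence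

variable {R : Type*} [CommRing R]
variable {ι κ : Type*} [Fintype ι] [DecidableEq ι] [Fintype κ] [DecidableEq κ]

/-- `B` is obtained from `A` by elementary row and column operations. -/
def ElementarilyEquivalent (A B : Matrix ι κ R) : Prop :=
  ∃ P ∈ elementaryMatrices ι R, ∃ Q ∈ elementaryMatrices κ R, P * A * Q = B

namespace ElementarilyEquivalent

theorem refl (A : Matrix ι κ R) : ElementarilyEquivalent A A :=
  ⟨1, one_mem _, 1, one_mem _, by simp⟩

theorem trans {A B C : Matrix ι κ R} (hAB : ElementarilyEquivalent A B)
    (hBC : ElementarilyEquivalent B C) : ElementarilyEquivalent A C := by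
  obtain ⟨P, hP, Q, hQ, rfl⟩ := hAB
  obtain ⟨P', hP', Q', hQ', rfl⟩ := hBC
  exact ⟨P' * P, mul_mem hP' hP, Q * Q', mul_mem hQ hQ', by simp only [Matrix.mul_assoc]⟩

theorem dvd {A B : Matrix ι κ R} (hAB : ElementarilyEquivalent A B) {g : R}
    (hg : ∀ i j, g ∣ A i j) (i : ι) (j : κ) : g ∣ B i j := by
  obtain ⟨P, -, Q, -, rfl⟩ := hAB
  simp only [mul_apply]
  exact Finset.dvd_sum fun k _ => (Finset.dvd_sum fun l _ => (hg l k).mul_left _).mul_right _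

theorem cons {m n : ℕ} {A B : Matrix (Fin m) (Fin n) R} (g : R)
    (hAB : ElementarilyEquivalent A B) :
    ElementarilyEquivalent (consDiagonal g A) (consDiagonal g B) := by
  obtain ⟨P, hP, Q, hQ, rfl⟩ := hAB
  exact ⟨_, consDiagonal.one_mem_elementaryMatrices hP, _,
    consDiagonal.one_mem_elementaryMatrices hQ, by simp only [consDiagonal.mul, one_mul, mul_one]⟩

theorem exists_consDiagonal_of_corner_dvd {m n : ℕ} (A : Matrix (Fin (m + 1)) (Fin (n + 1)) R)
    (hcol : ∀ i, A 0 0 ∣ A i 0) (hrow : ∀ j, A 0 0 ∣ A 0 j) :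
    ∃ B, ElementarilyEquivalent A (consDiagonal (A 0 0) B) := by
  choose z hz using fun i : Fin m => hcol i.succ
  choose w hw using fun j : Fin n => hrow j.succ
  refine ⟨of fun i j => A i.succ j.succ - z i * A 0 0 * w j,
    updateCol 1 0 (Fin.cons 1 (-z)), elementaryMatrices.updateCol_one_mem rfl,
    updateRow 1 0 (Fin.cons 1 (-w)), elementaryMatrices.updateRow_one_mem rfl, ?_⟩
  ext i j
  cases i using Fin.cases <;> cases j using Fin.cases <;>
    simp [mul_apply, Fin.sum_univ_succ, updateRow_apply, updateCol_apply, one_apply,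
      (Fin.succ_ne_zero _).symm, hz, hw] <;>
    ring

theorem exists_apply_eq_dotProduct_mulVec (A : Matrix ι κ R) {i : ι} {k : κ} {s : ι → R}
    {y : κ → R} (hs : s i = 1) (hy : y k = 1) :
    ∃ B, ElementarilyEquivalent A B ∧ B i k = s ⬝ᵥ (A *ᵥ y) := by
  refine ⟨_, ⟨_, elementaryMatrices.updateRow_one_mem hs, _,
    elementaryMatrices.updateCol_one_mem hy, rfl⟩, ?_⟩
  rw [dotProduct_mulVec]
  simp [mul_apply, dotProduct, vecMul]

end ElementarilyEquivalent

end Equivalence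

section SmithNormalForm

/-- A rectangular matrix is in Smith normal form when it is zero off the diagonal and each diagonal
entry divides the later ones. -/
structure IsSmithNormalForm {R : Type*} [CommRing R] {m n : ℕ} (B : Matrix (Fin m) (Fin n) R) :
    Prop where
  apply_eq_zero : ∀ (i : Fin m) (j : Fin n), (i : ℕ) ≠ j → B i j = 0
  dvd : ∀ (i : Fin m) (j : Fin n) (k : Fin m) (l : Fin n), (i : ℕ) = j → (k : ℕ) = l → i ≤ k →
    B i j ∣ B k l

theorem IsSmithNormalForm.cons {R : Type*} [CommRing R] {m n : ℕ} {g : R}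
    {B : Matrix (Fin m) (Fin n) R} (hB : IsSmithNormalForm B) (hg : ∀ i j, g ∣ B i j) :
    IsSmithNormalForm (consDiagonal g B) where
  apply_eq_zero i j hij := by
    cases i using Fin.cases <;> cases j using Fin.cases <;> simp_all [hB.apply_eq_zero]
  dvd i j k l hij hkl hik := by
    cases i using Fin.cases <;> cases j using Fin.cases <;> cases k using Fin.cases <;>
      cases l using Fin.cases <;> simp_all [hB.dvd]

theorem IsSmithNormalForm.eq_diagonal {R : Type*} [CommRing R] {n : ℕ}
    {B : Matrix (Fin n) (Fin n) R} (hB : IsSmithNormalForm B) :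
    B = diagonal fun i => B i i :=
  (IsDiag.diagonal_diag fun i j hij => hB.apply_eq_zero i j (Fin.val_ne_of_ne hij)).symm

theorem StableRange1.exists_elementarilyEquivalent_isSmithNormalForm {R : Type} [CommRing R]
    [IsBezout R] (hR : StableRange1 R) {m n : ℕ} (A : Matrix (Fin m) (Fin n) R) :
    ∃ B, ElementarilyEquivalent A B ∧ IsSmithNormalForm B := by
  induction m generalizing n with
  | zero => exact ⟨A, .refl A, fun i => i.elim0, fun i => i.elim0⟩
  | succ m ih =>
    cases n with
    | zero => exact ⟨A, .refl A, fun _ j => j.elim0, fun _ j => j.elim0⟩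
    | succ n =>
      obtain ⟨s, y, hs, hy, hdvd⟩ := hR.exists_dotProduct_mulVec_dvd 0 0 A
      obtain ⟨B, hAB, hB⟩ := ElementarilyEquivalent.exists_apply_eq_dotProduct_mulVec A hs hy
      have hcorner : ∀ i j, B 0 0 ∣ B i j := hAB.dvd (hB ▸ hdvd)
      obtain ⟨C, hBC⟩ := ElementarilyEquivalent.exists_consDiagonal_of_corner_dvd B
        (hcorner · 0) (hcorner 0)
      obtain ⟨D, hCD, hD⟩ := ih C
      have hC (i j) : B 0 0 ∣ C i j := hBC.dvd hcorner i.succ j.succ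
      exact ⟨_, (hAB.trans hBC).trans (hCD.cons _), hD.cons (hCD.dvd hC)⟩

theorem stmt_14_general {R : Type} [CommRing R] [IsBezout R] (hR : StableRange1 R) {m n : ℕ}
    (A : Matrix (Fin m) (Fin n) R) :
    ∃ P ∈ GE m R, ∃ Q ∈ GE n R, IsSmithNormalForm
      ((P : Matrix (Fin m) (Fin m) R) * A * (Q : Matrix (Fin n) (Fin n) R)) := by
  obtain ⟨_, ⟨_, hP, _, hQ, rfl⟩, hsmith⟩ :=
    hR.exists_elementarilyEquivalent_isSmithNormalForm A
  obtain ⟨P, hPmem, rfl⟩ := elementaryMatrices.exists_mem_GE_coe_eq hP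
  obtain ⟨Q, hQmem, rfl⟩ := elementaryMatrices.exists_mem_GE_coe_eq hQ
  exact ⟨P, hPmem, Q, hQmem, hsmith⟩

end SmithNormalForm

/-- If `R` is Bézout and `R/aR` is VNL for every `a ∉ J(R)`, then every square
matrix admits reduction by `P ∈ GEₙ(R)`, `Q ∈ GLₙ(R)` to `diag(ε₁,…,εₙ)` with
`εᵢ ∣ εᵢ₊₁`. -/
theorem stmt_14 (R : Type) [CommRing R] [IsBezout R]
    (h : ∀ a : R, a ∉ Ideal.jacobson (⊥ : Ideal R) →
      IsVNLRing (R ⧸ Ideal.span ({a} : Set R)))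
    (n : ℕ) (A : Matrix (Fin n) (Fin n) R) :
    ∃ (P Q : GL (Fin n) R), P ∈ GE n R ∧
      ∃ d : Fin n → R,
        (P : Matrix (Fin n) (Fin n) R) * A * (Q : Matrix (Fin n) (Fin n) R)
          = Matrix.diagonal d ∧
        ∀ i j : Fin n, (i : ℕ) + 1 = (j : ℕ) → d i ∣ d j := by
  obtain ⟨P, hP, Q, -, hsmith⟩ := stmt_14_general (stableRange1_of_isVNLRing_quotient h) A
  exact ⟨P, Q, hP, _, hsmith.eq_diagonal,
    fun i j hij => hsmith.dvd i i j j rfl rfl (Fin.le_def.mpr (by omega))⟩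
end
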